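/- arXiv:2205.15978 — 3 statements merged into one kernel-verified Lean document; each statement's English description precedes it below -/
import Mathlib

section
/- Let δ ∈ (0,π/2), let r₁, r₂ : (0,δ] → ℝ be continuously differentiable with s := r₂ − r₁ nowhere zero on (0,δ], suppose the derived Codazzi–Mainardi equation r₁'(θ) = s(θ)·cot θ holds on (0,δ], and suppose the umbilic slope μ₀ = lim_{θ→0} r₂'(θ)/r₁'(θ) exists. If μ₀ < α + 1 for some α ∈ ℝ, then |s(θ)|/sin^α θ → +∞ as θ → 0. -/
open Real Set Filter Topology

/-!
Put `s = r₂ - r₁`. By the Codazzi–Mainardi equation,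
`(log |s|)' = (r₂' / r₁' - 1) cot θ = (r₂' / r₁' - 1) (log sin θ)'`. If `r₂' / r₁' ≤ κ` near the
pole, then `|s| / sin ^ (κ - 1)` is antitone there, so it stays above a positive constant as
`θ → 0`. For `κ - 1 < α`, multiplying by `sin ^ (κ - 1 - α) → ∞` gives the divergence of
`|s| / sin ^ α`.
-/

theorem antitoneOn_abs_div_rpow_of_logDeriv_le {f g f' g' : ℝ → ℝ} {β : ℝ} {D : Set ℝ}
    (hD : Convex ℝ D) (hf : ∀ x ∈ D, HasDerivWithinAt f (f' x) D x)
    (hg : ∀ x ∈ D, HasDerivWithinAt g (g' x) D x) (hf₀ : ∀ x ∈ D, f x ≠ 0)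
    (hg₀ : ∀ x ∈ D, 0 < g x) (hle : ∀ x ∈ D, f' x / f x ≤ β * (g' x / g x)) :
    AntitoneOn (fun x => |f x| / g x ^ β) D := by
  have hderiv : ∀ x ∈ D, HasDerivWithinAt (fun x => log (f x) - β * log (g x))
      (f' x / f x - β * (g' x / g x)) D x := fun x hx =>
    ((hf x hx).log (hf₀ x hx)).sub (((hg x hx).log (hg₀ x hx).ne').const_mul β)
  have hanti : AntitoneOn (fun x => log (f x) - β * log (g x)) D :=
    antitoneOn_of_hasDerivWithinAt_nonpos hD (fun x hx => (hderiv x hx).continuousWithinAt)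
      (fun x hx => (hderiv x (interior_subset hx)).mono interior_subset)
      (fun x hx => sub_nonpos.2 (hle x (interior_subset hx)))
  refine (exp_monotone.comp_antitoneOn hanti).congr fun x hx => ?_
  have hfx : 0 < |f x| := abs_pos.2 (hf₀ x hx)
  simp only [Function.comp_apply]
  rw [rpow_def_of_pos (hg₀ x hx), exp_sub, ← log_abs, exp_log hfx, mul_comm β]

theorem tendsto_abs_div_rpow_atTop_of_logDeriv_le {f g f' g' : ℝ → ℝ} {a α β : ℝ}
    (hf : ∀ᶠ x in 𝓝[>] a, HasDerivAt f (f' x) x) (hg : ∀ᶠ x in 𝓝[>] a, HasDerivAt g (g' x) x)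
    (hf₀ : ∀ᶠ x in 𝓝[>] a, f x ≠ 0) (hg₀ : Tendsto g (𝓝[>] a) (𝓝[>] 0))
    (hle : ∀ᶠ x in 𝓝[>] a, f' x / f x ≤ β * (g' x / g x)) (hβα : β < α) :
    Tendsto (fun x => |f x| / g x ^ α) (𝓝[>] a) atTop := by
  have hg_pos : ∀ᶠ x in 𝓝[>] a, 0 < g x := hg₀ self_mem_nhdsWithin
  obtain ⟨b, hab : a < b, hb⟩ := mem_nhdsGT_iff_exists_Ioc_subset.1
    (hf.and (hg.and (hf₀.and (hg_pos.and hle))))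
  have hanti : AntitoneOn (fun x => |f x| / g x ^ β) (Ioc a b) :=
    antitoneOn_abs_div_rpow_of_logDeriv_le (convex_Ioc a b)
      (fun x hx => (hb hx).1.hasDerivWithinAt) (fun x hx => (hb hx).2.1.hasDerivWithinAt)
      (fun x hx => (hb hx).2.2.1) (fun x hx => (hb hx).2.2.2.1) (fun x hx => (hb hx).2.2.2.2)
  have hb_mem : b ∈ Ioc a b := right_mem_Ioc.2 hab
  obtain ⟨-, -, hfb, hgb, -⟩ := hb hb_mem
  have hc : 0 < |f b| / g b ^ β := div_pos (abs_pos.2 hfb) (rpow_pos_of_pos hgb β)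
  have hdiv : Tendsto (fun x => |f b| / g b ^ β * g x ^ (β - α)) (𝓝[>] a) atTop :=
    ((tendsto_rpow_neg_nhdsGT_zero (sub_neg.2 hβα)).comp hg₀).const_mul_atTop hc
  refine tendsto_atTop_mono' _ ?_ hdiv
  filter_upwards [Ioc_mem_nhdsGT hab, hg_pos] with x hx hgx
  calc |f b| / g b ^ β * g x ^ (β - α)
      ≤ |f x| / g x ^ β * g x ^ (β - α) := by gcongr ?_ * _; exact hanti hx hb_mem hx.2
    _ = |f x| / g x ^ α := by
      rw [rpow_sub hgx, div_mul_div_cancel₀ (rpow_pos_of_pos hgx β).ne']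

theorem tendsto_sin_nhdsGT_zero : Tendsto sin (𝓝[>] 0) (𝓝[>] 0) := by
  refine tendsto_nhdsWithin_iff.2 ⟨?_, ?_⟩
  · simpa only [sin_zero] using (continuous_sin.tendsto 0).mono_left nhdsWithin_le_nhds
  · filter_upwards [Ioo_mem_nhdsGT pi_pos] with θ hθ using sin_pos_of_mem_Ioo hθ

theorem sub_div_eq_div_sub_one_mul_of_codazzi {s c ρ₁ ρ₂ : ℝ} (hs : s ≠ 0) (hc : c ≠ 0)
    (hCM : ρ₁ = s * c) : (ρ₂ - ρ₁) / s = (ρ₂ / ρ₁ - 1) * c := by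
  subst hCM
  field_simp

theorem slope_lt_implies_divergence_general {r₁ r₂ r₁' r₂' : ℝ → ℝ} {κ α : ℝ}
    (hd₁ : ∀ᶠ θ in 𝓝[>] 0, HasDerivAt r₁ (r₁' θ) θ)
    (hd₂ : ∀ᶠ θ in 𝓝[>] 0, HasDerivAt r₂ (r₂' θ) θ)
    (hsne : ∀ᶠ θ in 𝓝[>] 0, r₂ θ - r₁ θ ≠ 0)
    (hCM : ∀ᶠ θ in 𝓝[>] 0, r₁' θ = (r₂ θ - r₁ θ) * (cos θ / sin θ))
    (hslope : ∀ᶠ θ in 𝓝[>] 0, r₂' θ / r₁' θ ≤ κ) (hκ : κ < α + 1) :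
    Tendsto (fun θ => |r₂ θ - r₁ θ| / sin θ ^ α) (𝓝[>] 0) atTop := by
  have hcot : ∀ᶠ θ in 𝓝[>] (0 : ℝ), 0 < cos θ / sin θ := by
    filter_upwards [Ioo_mem_nhdsGT pi_div_two_pos] with θ hθ
    exact div_pos (cos_pos_of_mem_Ioo ⟨by linarith [hθ.1, hθ.2], hθ.2⟩)
      (sin_pos_of_mem_Ioo ⟨hθ.1, by linarith [hθ.1, hθ.2]⟩)
  have hlogDeriv : ∀ᶠ θ in 𝓝[>] 0,
      (r₂' θ - r₁' θ) / (r₂ θ - r₁ θ) ≤ (κ - 1) * (cos θ / sin θ) := by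
    filter_upwards [hsne, hCM, hslope, hcot] with θ hs hCM hslope hcot
    rw [sub_div_eq_div_sub_one_mul_of_codazzi hs hcot.ne' hCM]
    gcongr
  exact tendsto_abs_div_rpow_atTop_of_logDeriv_le
    (hd₂.mp (hd₁.mono fun _ h₁ h₂ => h₂.sub h₁)) (.of_forall hasDerivAt_sin) hsne
    tendsto_sin_nhdsGT_zero hlogDeriv (sub_lt_iff_lt_add.2 hκ)

/-- If the umbilic slope `μ₀ = lim_{θ→0} r₂'/r₁'` exists and `μ₀ < α + 1`,
then `|s|/sin^α θ → +∞` as `θ → 0`. -/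
theorem slope_lt_implies_divergence
    (δ : ℝ) (hδ : δ ∈ Set.Ioo 0 (π/2))
    (r₁ r₂ r₁' r₂' : ℝ → ℝ)
    (hd₁ : ∀ θ ∈ Set.Ioc 0 δ, HasDerivAt r₁ (r₁' θ) θ)
    (hd₂ : ∀ θ ∈ Set.Ioc 0 δ, HasDerivAt r₂ (r₂' θ) θ)
    (hc₁ : ContinuousOn r₁' (Set.Ioc 0 δ))
    (hc₂ : ContinuousOn r₂' (Set.Ioc 0 δ))
    (hsne : ∀ θ ∈ Set.Ioc 0 δ, r₂ θ - r₁ θ ≠ 0)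
    (hCM : ∀ θ ∈ Set.Ioc 0 δ, r₁' θ = (r₂ θ - r₁ θ) * (Real.cos θ / Real.sin θ))
    (μ₀ : ℝ)
    (hμ : Tendsto (fun θ => r₂' θ / r₁' θ) (𝓝[>] (0:ℝ)) (𝓝 μ₀))
    (α : ℝ) (hα : μ₀ < α + 1) :
    Tendsto (fun θ => |r₂ θ - r₁ θ| / Real.sin θ ^ α) (𝓝[>] (0:ℝ)) atTop := by
  obtain ⟨κ, hμκ, hκα⟩ := exists_between hα
  have hmem : Ioc 0 δ ∈ 𝓝[>] 0 := Ioc_mem_nhdsGT hδ.1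
  exact slope_lt_implies_divergence_general (eventually_of_mem hmem hd₁)
    (eventually_of_mem hmem hd₂) (eventually_of_mem hmem hsne) (eventually_of_mem hmem hCM)
    (hμ.eventually_le_const hμκ) hκα
end

section
/- Let δ ∈ (0,π/2), let r₁, r₂ : [0,δ] → ℝ be continuously differentiable with s := r₂ − r₁ twice continuously differentiable on [0,δ], s(0) = 0, s'(0) = 0, s nowhere zero on (0,δ], and suppose the derived Codazzi–Mainardi equation r₁'(θ) = s(θ)·cot θ holds on (0,δ]. If the umbilic slope μ₀ = lim_{θ→0} r₂'(θ)/r₁'(θ) exists in ℝ, then μ₀ ≥ 3. -/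
open Real Set Filter Topology

/-!
Write `s = r₂ - r₁`. The Codazzi–Mainardi equation turns the quotient `r₂' / r₁'` into
`1 + s' / (s cot θ)`, so the umbilic slope `μ₀` says that the Euler quotient `θ s' / s` tends to
`μ₀ - 1` at the pole. An Euler quotient below `c` keeps `log |s| - c log θ` decreasing in `θ`,
hence bounded below near the pole, so `s` cannot decay faster than `θ ^ c`. As `s` is `O(θ ^ 2)`,
this forces `2 ≤ μ₀ - 1`.
-/

open Asymptotics

section EulerQuotient

variable {f : ℝ → ℝ} {c p ℓ : ℝ}

theorem antitoneOn_log_sub_const_mul_log {D : Set ℝ} (hD : Convex ℝ D) (hpos : D ⊆ Ioi 0)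
    (hf : ∀ x ∈ D, DifferentiableAt ℝ f x) (hne : ∀ x ∈ D, f x ≠ 0)
    (hc : ∀ x ∈ D, x * logDeriv f x ≤ c) :
    AntitoneOn (fun x => log (f x) - c * log x) D := by
  have hderiv : ∀ x ∈ D,
      HasDerivAt (fun x => log (f x) - c * log x) (logDeriv f x - c * x⁻¹) x := fun x hx =>
    ((hf x hx).hasDerivAt.log (hne x hx)).sub
      ((hasDerivAt_log (mem_Ioi.1 (hpos hx)).ne').const_mul c)
  refine antitoneOn_of_hasDerivWithinAt_nonpos hD
    (fun x hx => (hderiv x hx).continuousAt.continuousWithinAt)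
    (fun x hx => (hderiv x (interior_subset hx)).hasDerivWithinAt) fun x hx => ?_
  have hx := interior_subset hx
  rw [sub_nonpos, ← div_eq_mul_inv, le_div_iff₀' (hpos hx)]
  exact hc x hx

theorem rpow_isBigO_of_eventually_mul_logDeriv_le
    (hf : ∀ᶠ x in 𝓝[>] 0, DifferentiableAt ℝ f x) (hne : ∀ᶠ x in 𝓝[>] 0, f x ≠ 0)
    (hc : ∀ᶠ x in 𝓝[>] 0, x * logDeriv f x ≤ c) :
    (fun x => x ^ c) =O[𝓝[>] 0] f := by
  obtain ⟨ε, hε : 0 < ε, hsub⟩ :=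
    mem_nhdsGT_iff_exists_Ioc_subset.1 (hf.and (hne.and hc))
  have hanti : AntitoneOn (fun x => log (f x) - c * log x) (Ioc 0 ε) :=
    antitoneOn_log_sub_const_mul_log (convex_Ioc 0 ε) Ioc_subset_Ioi_self
      (fun x hx => (hsub hx).1) (fun x hx => (hsub hx).2.1) fun x hx => (hsub hx).2.2
  set m := log (f ε) - c * log ε
  refine IsBigO.of_bound (exp (-m)) (eventually_of_mem (Ioc_mem_nhdsGT hε) fun x hx => ?_)
  have hm : m ≤ log (f x) - c * log x := hanti hx ⟨hε, le_rfl⟩ hx.2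
  calc ‖x ^ c‖ = exp (log x * c) := by
        rw [norm_of_nonneg (rpow_nonneg hx.1.le c), rpow_def_of_pos hx.1]
    _ ≤ exp (-m + log (f x)) := exp_le_exp.2 (by linarith)
    _ = exp (-m) * ‖f x‖ := by rw [exp_add, exp_log_eq_abs (hsub hx).2.1, norm_eq_abs]

theorem le_of_rpow_isBigO_rpow_nhdsGT_zero
    (h : (fun x : ℝ => x ^ c) =O[𝓝[>] 0] fun x => x ^ p) : p ≤ c := by
  by_contra! hlt
  have hbdd : (fun x : ℝ => x ^ (c - p)) =O[𝓝[>] 0] fun _ => (1 : ℝ) := by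
    refine (h.mul (isBigO_refl (fun x : ℝ => x ^ (-p)) _)).congr' ?_ ?_
    · filter_upwards [self_mem_nhdsWithin] with x hx
      rw [sub_eq_add_neg, rpow_add hx]
    · filter_upwards [self_mem_nhdsWithin] with x hx
      rw [← rpow_add hx, add_neg_cancel, rpow_zero]
  exact not_isBoundedUnder_of_tendsto_atTop
    (tendsto_norm_atTop_atTop.comp (tendsto_rpow_neg_nhdsGT_zero (sub_neg.2 hlt)))
    hbdd.isBoundedUnder_le

theorem le_of_isBigO_rpow_of_tendsto_mul_logDeriv
    (hf : ∀ᶠ x in 𝓝[>] 0, DifferentiableAt ℝ f x) (hne : ∀ᶠ x in 𝓝[>] 0, f x ≠ 0)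
    (hO : f =O[𝓝[>] 0] fun x => x ^ p)
    (hℓ : Tendsto (fun x => x * logDeriv f x) (𝓝[>] 0) (𝓝 ℓ)) : p ≤ ℓ :=
  le_of_forall_gt_imp_ge_of_dense fun _ hc => le_of_rpow_isBigO_rpow_nhdsGT_zero <|
    (rpow_isBigO_of_eventually_mul_logDeriv_le hf hne (hℓ.eventually_le_const hc)).trans hO

end EulerQuotient

theorem isBigO_pow_of_iteratedDerivWithin_eq_zero {E : Type*} [NormedAddCommGroup E]
    [NormedSpace ℝ E] {f : ℝ → E} {a : ℝ} {n : ℕ} {D : Set ℝ} (hD : Convex ℝ D) (ha : a ∈ D)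
    (hf : ContDiffOn ℝ n f D) (h0 : ∀ k < n, iteratedDerivWithin k f D a = 0) :
    f =O[𝓝[D] a] fun x => (x - a) ^ n := by
  have htaylor : taylorWithinEval f n D a =
      fun x => ((n.factorial : ℝ)⁻¹ * (x - a) ^ n) • iteratedDerivWithin n f D a := by
    funext x
    rw [taylor_within_apply, Finset.sum_range_succ, Finset.sum_eq_zero, zero_add]
    intro k hk
    rw [h0 k (Finset.mem_range.1 hk), smul_zero]
  have hpoly : taylorWithinEval f n D a =O[𝓝[D] a] fun x => (x - a) ^ n := by
    rw [htaylor]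
    simpa using ((isBigO_refl (fun x => (x - a) ^ n) _).const_mul_left _).smul
      (isBigO_const_const (iteratedDerivWithin n f D a) (one_ne_zero (α := ℝ)) _)
  simpa using (taylor_isLittleO hD ha hf).isBigO.add hpoly

theorem isBigO_sq_of_deriv_eq_zero {E : Type*} [NormedAddCommGroup E] [NormedSpace ℝ E]
    {f : ℝ → E} {a : ℝ} (hf : ContDiff ℝ 2 f) (h0 : f a = 0) (h1 : deriv f a = 0) :
    f =O[𝓝 a] fun x => (x - a) ^ 2 := by
  rw [← nhdsWithin_univ]
  refine isBigO_pow_of_iteratedDerivWithin_eq_zero convex_univ (mem_univ a) hf.contDiffOn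
    fun k hk => ?_
  interval_cases k <;> simpa [iteratedDerivWithin_univ]

theorem tendsto_mul_cos_div_sin_nhdsNE_zero :
    Tendsto (fun x => x * (cos x / sin x)) (𝓝[≠] 0) (𝓝 1) := by
  have hsinc : Tendsto (fun x => cos x / sinc x) (𝓝 0) (𝓝 (cos 0 / sinc 0)) :=
    (continuous_cos.tendsto 0).div (continuous_sinc.tendsto 0) (by simp)
  rw [cos_zero, sinc_zero, div_one] at hsinc
  refine (hsinc.mono_left nhdsWithin_le_nhds).congr' ?_
  filter_upwards [self_mem_nhdsWithin] with x hx
  rw [sinc_of_ne_zero hx, div_div_eq_mul_div, mul_comm, mul_div_assoc]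

section CodazziMainardi

variable {r₁ r₂ : ℝ → ℝ} {μ₀ : ℝ}

theorem tendsto_mul_logDeriv_astigmatism
    (hd : ∀ᶠ θ in 𝓝[>] 0, DifferentiableAt ℝ r₂ θ)
    (hne : ∀ᶠ θ in 𝓝[>] 0, r₂ θ - r₁ θ ≠ 0)
    (hCM : ∀ᶠ θ in 𝓝[>] 0, HasDerivAt r₁ ((r₂ θ - r₁ θ) * (cos θ / sin θ)) θ)
    (hμ : Tendsto (fun θ => deriv r₂ θ / deriv r₁ θ) (𝓝[>] 0) (𝓝 μ₀)) :
    Tendsto (fun θ => θ * logDeriv (fun θ => r₂ θ - r₁ θ) θ) (𝓝[>] 0) (𝓝 (μ₀ - 1)) := by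
  have hcot := tendsto_mul_cos_div_sin_nhdsNE_zero.mono_left (nhdsGT_le_nhdsNE 0)
  have hlim := hcot.mul (hμ.sub_const 1)
  rw [one_mul] at hlim
  refine hlim.congr' ?_
  filter_upwards [hd, hne, hCM, hcot.eventually_ne one_ne_zero] with θ hdθ hneθ hCMθ hcotθ
  rw [logDeriv_apply, deriv_fun_sub hdθ hCMθ.differentiableAt, hCMθ.deriv]
  generalize cos θ / sin θ = k at hcotθ
  have hk : k ≠ 0 := right_ne_zero_of_mul hcotθ
  field_simp

theorem c4_umbilic_slope_ge_three_general {p : ℝ}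
    (hd : ∀ᶠ θ in 𝓝[>] 0, DifferentiableAt ℝ r₂ θ)
    (hO : (fun θ => r₂ θ - r₁ θ) =O[𝓝[>] 0] fun θ => θ ^ p)
    (hne : ∀ᶠ θ in 𝓝[>] 0, r₂ θ - r₁ θ ≠ 0)
    (hCM : ∀ᶠ θ in 𝓝[>] 0, HasDerivAt r₁ ((r₂ θ - r₁ θ) * (cos θ / sin θ)) θ)
    (hμ : Tendsto (fun θ => deriv r₂ θ / deriv r₁ θ) (𝓝[>] 0) (𝓝 μ₀)) :
    p + 1 ≤ μ₀ := by
  have hdiff : ∀ᶠ θ in 𝓝[>] 0, DifferentiableAt ℝ (fun θ => r₂ θ - r₁ θ) θ := by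
    filter_upwards [hd, hCM] with θ hdθ hCMθ using hdθ.fun_sub hCMθ.differentiableAt
  exact le_sub_iff_add_le.1 <| le_of_isBigO_rpow_of_tendsto_mul_logDeriv hdiff hne hO <|
    tendsto_mul_logDeriv_astigmatism hd hne hCM hμ

end CodazziMainardi

/-- For a C⁴-smooth strictly convex rotationally symmetric sphere (so that the
astigmatism `s = r₂ − r₁` is C² with `s(0) = s'(0) = 0`), if the umbilic slope
`μ₀ = lim_{θ→0} r₂'/r₁'` exists in `ℝ` then `μ₀ ≥ 3`. -/
theorem c4_umbilic_slope_ge_three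
    (δ : ℝ) (hδ : δ ∈ Set.Ioo 0 (π/2))
    (r₁ r₂ : ℝ → ℝ) (h₁ : ContDiff ℝ 1 r₁) (h₂ : ContDiff ℝ 1 r₂)
    (hs2 : ContDiff ℝ 2 (fun θ => r₂ θ - r₁ θ))
    (hs0 : r₂ 0 - r₁ 0 = 0)
    (hs1 : deriv (fun θ => r₂ θ - r₁ θ) 0 = 0)
    (hsne : ∀ θ ∈ Set.Ioc 0 δ, r₂ θ - r₁ θ ≠ 0)
    (hCM : ∀ θ ∈ Set.Ioc 0 δ, deriv r₁ θ = (r₂ θ - r₁ θ) * (Real.cos θ / Real.sin θ))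
    (μ₀ : ℝ)
    (hμ : Tendsto (fun θ => deriv r₂ θ / deriv r₁ θ) (𝓝[>] (0:ℝ)) (𝓝 μ₀)) :
    3 ≤ μ₀ := by
  have hO : (fun θ => r₂ θ - r₁ θ) =O[𝓝[>] 0] fun θ => θ ^ (2 : ℝ) := by
    simpa using (isBigO_sq_of_deriv_eq_zero hs2 hs0 hs1).mono nhdsWithin_le_nhds
  have hnear : Ioc 0 δ ∈ 𝓝[>] 0 := Ioc_mem_nhdsGT hδ.1
  have hCM' : ∀ᶠ θ in 𝓝[>] 0, HasDerivAt r₁ ((r₂ θ - r₁ θ) * (cos θ / sin θ)) θ :=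
    eventually_of_mem hnear fun θ hθ =>
      hCM θ hθ ▸ (h₁.differentiable one_ne_zero θ).hasDerivAt
  linarith [c4_umbilic_slope_ge_three_general
    (.of_forall (h₂.differentiable one_ne_zero)) hO (eventually_of_mem hnear hsne) hCM' hμ]
end

section
/- Let r : [0,π] → ℝ be twice continuously differentiable with r'(0) = r'(π) = 0, and suppose θ ↦ (r''(θ) − r'(θ)·cot θ)/sin θ is integrable on (0,π). Then ∫₀^π (r''(θ) − r'(θ)·cot θ)/sin θ dθ = −(r''(0) + r''(π)). Equivalently, writing s = r₂ − r₁ for the astigmatism and f₀ = r(0) − r₁(0), f_π = −r(π) + r₁(π) for the x³-coordinates of the focal points at the poles (where r₁(0) = r(0) + r''(0) and r₁(π) = r(π) + r''(π) are the limiting values of r₁ = r'·cot θ + r), one has ∫₀^π s(θ)/sin θ dθ = f₀ − f_π. -/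
open Real Set MeasureTheory

/-! The function `r' / sin` is a primitive of `s / sin`, so the integral is the difference of its
limits at the two poles. Since `cos 0 = 1` and `cos π = -1`, near the poles `r' / sin` behaves like
`± r' · cot = ± (r₁ - r)`, so these limits are `-f₀` and `-f_π`. -/

open Filter Topology

/-- The radius of curvature `r₁ = r' · cot + r` of the rotationally symmetric surface with support
function `r`, in the direction of the parallels. At the poles, where `sin` vanishes, division by
zero gives the value `r` instead of the geometric radius, which is the limit there. -/
noncomputable def parallelRadius (r : ℝ → ℝ) (θ : ℝ) : ℝ :=
  deriv r θ * (cos θ / sin θ) + r θ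

/-- The astigmatism `s = r₂ - r₁` of the rotationally symmetric surface with support function `r`,
where `r₂ = r'' + r`; the two terms `r` have been cancelled. -/
noncomputable def astigmatism (r : ℝ → ℝ) (θ : ℝ) : ℝ :=
  deriv (deriv r) θ - deriv r θ * (cos θ / sin θ)

theorem tendsto_div_of_hasDerivAt {𝕜 : Type*} [NontriviallyNormedField 𝕜] {f g : 𝕜 → 𝕜}
    {f' g' a : 𝕜} (hf : HasDerivAt f f' a) (hg : HasDerivAt g g' a) (hfa : f a = 0)
    (hga : g a = 0) (hg' : g' ≠ 0) :
    Tendsto (fun x => f x / g x) (𝓝[≠] a) (𝓝 (f' / g')) := by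
  refine (hf.tendsto_slope.div hg.tendsto_slope hg').congr' ?_
  filter_upwards [self_mem_nhdsWithin] with x hx
  simp only [Pi.div_apply, slope_def_field, hfa, hga, sub_zero]
  exact div_div_div_cancel_right₀ (sub_ne_zero.2 hx) _ _

theorem tendsto_mul_cos_div_sin_of_hasDerivAt {f : ℝ → ℝ} {f' a : ℝ} (hf : HasDerivAt f f' a)
    (hfa : f a = 0) (ha : sin a = 0) :
    Tendsto (fun θ => f θ * (cos θ / sin θ)) (𝓝[≠] a) (𝓝 f') := by
  have hcos : cos a ≠ 0 := fun h => by simpa [ha, h] using sin_sq_add_cos_sq a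
  have hlim := tendsto_div_of_hasDerivAt (hf.mul (hasDerivAt_cos a)) (hasDerivAt_sin a)
    (by simp [hfa]) ha hcos
  simpa [hfa, hcos, mul_div_assoc] using hlim

theorem tendsto_parallelRadius {r : ℝ → ℝ} {a : ℝ} (hr : ContinuousAt r a)
    (hr' : DifferentiableAt ℝ (deriv r) a) (hra : deriv r a = 0) (ha : sin a = 0) :
    Tendsto (parallelRadius r) (𝓝[≠] a) (𝓝 (r a + deriv (deriv r) a)) := by
  rw [add_comm]
  exact (tendsto_mul_cos_div_sin_of_hasDerivAt hr'.hasDerivAt hra ha).add hr.continuousWithinAt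

theorem tendsto_deriv_div_sin_of_parallelRadius {r : ℝ → ℝ} {a R : ℝ} {s : Set ℝ}
    (hr : ContinuousWithinAt r s a) (hR : Tendsto (parallelRadius r) (𝓝[s] a) (𝓝 R))
    (ha : cos a ≠ 0) :
    Tendsto (fun θ => deriv r θ / sin θ) (𝓝[s] a) (𝓝 ((R - r a) / cos a)) := by
  have hcos : ContinuousWithinAt cos s a := continuous_cos.continuousWithinAt
  refine ((hR.sub hr).div hcos ha).congr' ?_
  filter_upwards [hcos.eventually_ne ha] with θ hθ
  simp only [Pi.div_apply, parallelRadius, add_sub_cancel_right]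
  field_simp

theorem hasDerivAt_deriv_div_sin {r : ℝ → ℝ} {θ : ℝ} (hr' : DifferentiableAt ℝ (deriv r) θ)
    (hθ : sin θ ≠ 0) :
    HasDerivAt (fun x => deriv r x / sin x) (astigmatism r θ / sin θ) θ := by
  refine (hr'.hasDerivAt.div (hasDerivAt_sin θ) hθ).congr_deriv ?_
  rw [astigmatism]
  field_simp

theorem astigmatism_integral_eq_focal_distance_general {r : ℝ → ℝ} {R₀ Rπ : ℝ}
    (hr : DifferentiableOn ℝ r (Icc 0 π)) (hr' : DifferentiableOn ℝ (deriv r) (Ioo 0 π))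
    (hR₀ : Tendsto (parallelRadius r) (𝓝[>] 0) (𝓝 R₀))
    (hRπ : Tendsto (parallelRadius r) (𝓝[<] π) (𝓝 Rπ))
    (hint : IntegrableOn (fun θ => astigmatism r θ / sin θ) (Ioo 0 π)) :
    ∫ θ in Ioo 0 π, astigmatism r θ / sin θ = (r 0 - R₀) - (-r π + Rπ) := by
  have hcont₀ : ContinuousWithinAt r (Ioi 0) 0 :=
    (hr.continuousOn 0 (left_mem_Icc.2 pi_pos.le)).mono_of_mem_nhdsWithin
      (Icc_mem_nhdsGT pi_pos)
  have hcontπ : ContinuousWithinAt r (Iio π) π :=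
    (hr.continuousOn π (right_mem_Icc.2 pi_pos.le)).mono_of_mem_nhdsWithin
      (Icc_mem_nhdsLT pi_pos)
  have hderiv : ∀ θ ∈ Ioo 0 π,
      HasDerivAt (fun x => deriv r x / sin x) (astigmatism r θ / sin θ) θ := fun θ hθ =>
    hasDerivAt_deriv_div_sin (hr'.differentiableAt (isOpen_Ioo.mem_nhds hθ))
      (sin_pos_of_mem_Ioo hθ).ne'
  calc ∫ θ in Ioo 0 π, astigmatism r θ / sin θ
      = ∫ θ in 0..π, astigmatism r θ / sin θ := by
        rw [intervalIntegral.integral_of_le pi_pos.le, integral_Ioc_eq_integral_Ioo]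
    _ = (Rπ - r π) / cos π - (R₀ - r 0) / cos 0 :=
        intervalIntegral.integral_eq_sub_of_hasDerivAt_of_tendsto pi_pos hderiv
          ((intervalIntegrable_iff_integrableOn_Ioo_of_le pi_pos.le).2 hint)
          (tendsto_deriv_div_sin_of_parallelRadius hcont₀ hR₀ (by simp))
          (tendsto_deriv_div_sin_of_parallelRadius hcontπ hRπ (by simp))
    _ = (r 0 - R₀) - (-r π + Rπ) := by
        rw [cos_pi, cos_zero]
        ring

/-- For a support function `r` that is C² with `r'(0) = r'(π) = 0`, if the astigmatism
`s = r'' − r'·cot θ` satisfies `s/sin θ` integrable on `(0,π)`, then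
`∫₀^π s/sin θ dθ = −(r''(0) + r''(π)) = f₀ − f_π`, the signed distance between the focal
points at the poles. -/
theorem astigmatism_integral_eq_focal_distance
    (r : ℝ → ℝ) (hr : ContDiff ℝ 2 r)
    (h0 : deriv r 0 = 0) (hπ : deriv r π = 0)
    (hint : IntegrableOn
        (fun θ => (deriv (deriv r) θ - deriv r θ * (Real.cos θ / Real.sin θ)) / Real.sin θ)
        (Set.Ioo 0 π)) :
    ∫ θ in Set.Ioo 0 π,
        (deriv (deriv r) θ - deriv r θ * (Real.cos θ / Real.sin θ)) / Real.sin θ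
      = -(deriv (deriv r) 0 + deriv (deriv r) π) ∧
    -(deriv (deriv r) 0 + deriv (deriv r) π)
      = (r 0 - (r 0 + deriv (deriv r) 0)) - (-(r π) + (r π + deriv (deriv r) π)) := by
  have hr' : Differentiable ℝ (deriv r) := hr.differentiable_deriv_two
  have hR₀ := tendsto_parallelRadius hr.continuous.continuousAt (hr' 0) h0 sin_zero
  have hRπ := tendsto_parallelRadius hr.continuous.continuousAt (hr' π) hπ sin_pi
  have hfocal := astigmatism_integral_eq_focal_distance_general
    (hr.differentiable two_ne_zero).differentiableOn hr'.differentiableOn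
    (hR₀.mono_left (nhdsGT_le_nhdsNE 0)) (hRπ.mono_left (nhdsLT_le_nhdsNE π)) hint
  exact ⟨hfocal.trans (by ring), by ring⟩
end
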